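/- Let F be an n×k real matrix with C = F·Fᵀ, let k ≤ n, and let F̄ := [F | 0] be the n×n matrix obtained from F by appending n−k zero columns (so C = F̄·F̄ᵀ). Then: (i) for every DFact-feasible tuple (Θ, υ, ν, π, τ) for (C, s, A, b; F) there exists an n×n symmetric positive definite Θ̄ such that (Θ̄, υ, ν, π, τ) is DFact-feasible for (C, s, A, b; F̄) with equal objective value; and (ii) for every DFact-feasible tuple (Θ̄, υ, ν, π, τ) for (C, s, A, b; F̄) there exists a k×k symmetric positive definite Θ such that (Θ, υ, ν, π, τ) is DFact-feasible for (C, s, A, b; F) with objective value at most that of (Θ̄, υ, ν, π, τ). Consequently the factorization bound with factor F̄ equals the factorization bound with factor F. -/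

import Mathlib

open Matrix

/-- The eigenvalues of a real symmetric matrix, sorted in nonincreasing order:
`sortedEigs M 0` is the largest eigenvalue (`λ_1`) and `sortedEigs M (k-1)` the
smallest (`λ_k`).  For non-Hermitian matrices we return the junk value `0`. -/
noncomputable def sortedEigs {k : ℕ} (M : Matrix (Fin k) (Fin k) ℝ) : Fin k → ℝ :=
  if h : M.IsHermitian then fun i => (h.eigenvalues ∘ Tuple.sort h.eigenvalues) i.rev
  else fun _ => 0

/-- DFact-feasibility of the tuple `(Θ, υ, ν, π, τ)` for the data `(A; F)`:
`Θ ≻ 0`, `υ, ν, π ≥ 0` and `diag(FΘFᵀ) + υ − ν − Aᵀπ − τ𝟙 = 0`. -/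
def DFactFeasible {n m k : ℕ} (A : Matrix (Fin m) (Fin n) ℝ) (F : Matrix (Fin n) (Fin k) ℝ)
    (Θ : Matrix (Fin k) (Fin k) ℝ) (υ ν : Fin n → ℝ) (π : Fin m → ℝ) (τ : ℝ) : Prop :=
  Θ.PosDef ∧ (∀ j, 0 ≤ υ j) ∧ (∀ j, 0 ≤ ν j) ∧ (∀ i, 0 ≤ π i) ∧
    ∀ j, (F * Θ * Fᵀ) j j + υ j - ν j - (∑ i, A i j * π i) - τ = 0

/-- The DFact objective value
`f(Θ, ν, π, τ) = −Σ_{ℓ=k−s+1}^{k} log λ_ℓ(Θ) + νᵀ𝟙 + πᵀb + τ·s − s`. -/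
noncomputable def DFactObj {n m k : ℕ} (s : ℕ) (b : Fin m → ℝ)
    (Θ : Matrix (Fin k) (Fin k) ℝ) (ν : Fin n → ℝ) (π : Fin m → ℝ) (τ : ℝ) : ℝ :=
  -(∑ i : Fin k, if k - s ≤ (i : ℕ) then Real.log (sortedEigs Θ i) else 0)
    + (∑ j, ν j) + (∑ i, π i * b i) + τ * s - s


/-- `F̄ = [F | 0]`: the `n×n` matrix obtained from an `n×k` matrix `F` (with `k ≤ n`)
by appending `n − k` zero columns. -/
def padCols {n k : ℕ} (F : Matrix (Fin n) (Fin k) ℝ) : Matrix (Fin n) (Fin n) ℝ :=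
  Matrix.of fun i j => if h : (j : ℕ) < k then F i ⟨(j : ℕ), h⟩ else 0

/-!
For `F̄ = [F | 0]`, the matrix `F̄ M F̄ᵀ` depends only on the leading `k × k` principal submatrix of
`M`. Passing from `M` to this submatrix therefore preserves feasibility, and by Cauchy interlacing
the `l`-th smallest eigenvalue does not decrease, so the objective does not increase. Conversely,
extend `Θ` to `diag(Θ, μ I)` with `μ ≥ λ₁(Θ)`: the new eigenvalues are all at the top of the
spectrum, so the `s` smallest ones, and with them the objective, stay the same.
-/

lemma exists_ne_zero_of_card_add_card_lt_finrank {K V ι κ : Type*} [Field K] [AddCommGroup V]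
    [Module K V] [FiniteDimensional K V] [Fintype ι] [Fintype κ]
    (f : V →ₗ[K] ι → K) (g : V →ₗ[K] κ → K)
    (h : Fintype.card ι + Fintype.card κ < Module.finrank K V) : ∃ x ≠ 0, f x = 0 ∧ g x = 0 := by
  have hker : (f.prod g).ker ≠ ⊥ := LinearMap.ker_ne_bot_of_finrank_lt (by simpa using h)
  obtain ⟨x, hx, hx0⟩ := (Submodule.ne_bot_iff _).1 hker
  exact ⟨x, hx0, by simpa using hx⟩

section Interlacing

open LinearMap.IsSymmetric Module

variable {𝕜 E G : Type*} [RCLike 𝕜] [NormedAddCommGroup E] [InnerProductSpace 𝕜 E]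
  [NormedAddCommGroup G] [InnerProductSpace 𝕜 G] [FiniteDimensional 𝕜 E] [FiniteDimensional 𝕜 G]
  {n k : ℕ} {T : E →ₗ[𝕜] E} {S : G →ₗ[𝕜] G}

lemma re_inner_apply_self_eq_sum_eigenvalues (hT : T.IsSymmetric) (hn : finrank 𝕜 E = n) (x : E) :
    RCLike.re (inner 𝕜 (T x) x) =
      ∑ i, hT.eigenvalues hn i * ‖(hT.eigenvectorBasis hn).repr x i‖ ^ 2 := by
  rw [← (hT.eigenvectorBasis hn).repr.inner_map_map, PiLp.inner_apply, map_sum]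
  refine Finset.sum_congr rfl fun i _ => ?_
  rw [eigenvectorBasis_apply_self_apply, ← smul_eq_mul, inner_smul_real_left, RCLike.smul_re,
    inner_self_eq_norm_sq]

lemma norm_sq_eq_sum_repr_eigenvectorBasis (hT : T.IsSymmetric) (hn : finrank 𝕜 E = n) (x : E) :
    ‖x‖ ^ 2 = ∑ i, ‖(hT.eigenvectorBasis hn).repr x i‖ ^ 2 := by
  rw [← (hT.eigenvectorBasis hn).repr.norm_map, EuclideanSpace.norm_sq_eq]

lemma eigenvalues_mul_norm_sq_le_re_inner (hT : T.IsSymmetric) (hn : finrank 𝕜 E = n) (i : Fin n)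
    {x : E} (hx : ∀ l, i < l → (hT.eigenvectorBasis hn).repr x l = 0) :
    hT.eigenvalues hn i * ‖x‖ ^ 2 ≤ RCLike.re (inner 𝕜 (T x) x) := by
  rw [re_inner_apply_self_eq_sum_eigenvalues hT hn, norm_sq_eq_sum_repr_eigenvectorBasis hT hn,
    Finset.mul_sum]
  refine Finset.sum_le_sum fun l _ => ?_
  obtain hl | hl := lt_or_ge i l
  · simp [hx l hl]
  · gcongr
    exact hT.eigenvalues_antitone hn hl

lemma re_inner_le_eigenvalues_mul_norm_sq (hT : T.IsSymmetric) (hn : finrank 𝕜 E = n) (i : Fin n)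
    {x : E} (hx : ∀ l, l < i → (hT.eigenvectorBasis hn).repr x l = 0) :
    RCLike.re (inner 𝕜 (T x) x) ≤ hT.eigenvalues hn i * ‖x‖ ^ 2 := by
  rw [re_inner_apply_self_eq_sum_eigenvalues hT hn, norm_sq_eq_sum_repr_eigenvectorBasis hT hn,
    Finset.mul_sum]
  refine Finset.sum_le_sum fun l _ => ?_
  obtain hl | hl := lt_or_ge l i
  · simp [hx l hl]
  · gcongr
    exact hT.eigenvalues_antitone hn hl

theorem eigenvalues_le_eigenvalues_of_re_inner_le (hT : T.IsSymmetric) (hS : S.IsSymmetric)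
    (hn : finrank 𝕜 E = n) (hk : finrank 𝕜 G = k) (V : G →ₗᵢ[𝕜] E)
    (hV : ∀ x, RCLike.re (inner 𝕜 (T (V x)) (V x)) ≤ RCLike.re (inner 𝕜 (S x) x))
    {i : Fin n} {j : Fin k} (hij : n + j ≤ k + i) :
    hT.eigenvalues hn i ≤ hS.eigenvalues hk j := by
  -- `V x` in the span of the top `i + 1` eigenvectors of `T` and `x` orthogonal to the top `j`
  -- eigenvectors of `S` are `(n - 1 - i) + j < k` linear conditions on `x`.
  let coordT : G →ₗ[𝕜] Finset.Ioi i → 𝕜 := LinearMap.pi fun l =>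
    (hT.eigenvectorBasis hn).toBasis.coord l ∘ₗ V.toLinearMap
  let coordS : G →ₗ[𝕜] Finset.Iio j → 𝕜 := LinearMap.pi fun l =>
    (hS.eigenvectorBasis hk).toBasis.coord l
  obtain ⟨x, hx, hxT, hxS⟩ := exists_ne_zero_of_card_add_card_lt_finrank coordT coordS (by
    simp only [Fintype.card_coe, Fin.card_Ioi, Fin.card_Iio, hk]
    omega)
  have hlower : hT.eigenvalues hn i * ‖x‖ ^ 2 ≤ RCLike.re (inner 𝕜 (T (V x)) (V x)) := by
    rw [← V.norm_map]
    refine eigenvalues_mul_norm_sq_le_re_inner hT hn i fun l hl => ?_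
    simpa [coordT] using congrFun hxT ⟨l, Finset.mem_Ioi.2 hl⟩
  have hupper : RCLike.re (inner 𝕜 (S x) x) ≤ hS.eigenvalues hk j * ‖x‖ ^ 2 := by
    refine re_inner_le_eigenvalues_mul_norm_sq hS hk j fun l hl => ?_
    simpa [coordS] using congrFun hxS ⟨l, Finset.mem_Iio.2 hl⟩
  exact le_of_mul_le_mul_right ((hlower.trans (hV x)).trans hupper) (by positivity)

end Interlacing

lemma inner_toEuclideanLin_conjTranspose_mul_mul {𝕜 m n : Type*} [RCLike 𝕜] [Fintype m] [Fintype n]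
    [DecidableEq m] [DecidableEq n] (M : Matrix m m 𝕜) (J : Matrix m n 𝕜)
    (x y : EuclideanSpace 𝕜 n) :
    inner 𝕜 (toEuclideanLin (Jᴴ * M * J) x) y =
      inner 𝕜 (toEuclideanLin M (toEuclideanLin J x)) (toEuclideanLin J y) := by
  rw [← LinearMap.adjoint_inner_left, ← toEuclideanLin_conjTranspose_eq_adjoint]
  simp [toLpLin_apply]

section SortedEigs

variable {n k : ℕ}

lemma antitone_sortedEigs (M : Matrix (Fin k) (Fin k) ℝ) : Antitone (sortedEigs M) := by
  unfold sortedEigs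
  split_ifs with hM
  · exact (Tuple.monotone_sort hM.eigenvalues).comp_antitone Fin.rev_anti
  · exact antitone_const

lemma map_sortedEigs {M : Matrix (Fin k) (Fin k) ℝ} (hM : M.IsHermitian) :
    Finset.univ.val.map (sortedEigs M) = M.charpoly.roots := by
  rw [hM.roots_charpoly_eq_eigenvalues, sortedEigs, dif_pos hM]
  exact (Multiset.map_map ..).symm.trans (congrArg (Multiset.map hM.eigenvalues)
    (Multiset.map_univ_val_equiv (Fin.revPerm.trans (Tuple.sort hM.eigenvalues))))

lemma ofFn_sortedEigs_eq_of_sortedGE {M : Matrix (Fin k) (Fin k) ℝ} (hM : M.IsHermitian)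
    {l : List ℝ} (hl : l.SortedGE) (hroots : (l : Multiset ℝ) = M.charpoly.roots) :
    List.ofFn (sortedEigs M) = l := by
  refine List.Perm.eq_of_sortedGE (antitone_sortedEigs M).sortedGE_ofFn hl ?_
  rw [← Multiset.coe_eq_coe, hroots, ← map_sortedEigs hM, Fin.univ_val_map]

lemma sortedEigs_eq_eigenvalues {M : Matrix (Fin k) (Fin k) ℝ} (hM : M.IsHermitian) :
    sortedEigs M =
      (isSymmetric_toEuclideanLin_iff.2 hM).eigenvalues finrank_euclideanSpace_fin := by
  have hT := isSymmetric_toEuclideanLin_iff.2 hM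
  refine List.ofFn_injective (ofFn_sortedEigs_eq_of_sortedGE hM
    (hT.eigenvalues_antitone finrank_euclideanSpace_fin).sortedGE_ofFn ?_)
  rw [← charpoly_toLin M (PiLp.basisFun 2 ℝ (Fin k)), ← toLpLin_eq_toLin,
    hT.roots_charpoly_eq_eigenvalues finrank_euclideanSpace_fin,
    Fin.univ_val_map]
  rfl

lemma sortedEigs_pos {M : Matrix (Fin k) (Fin k) ℝ} (hM : M.PosDef) (i : Fin k) :
    0 < sortedEigs M i := by
  rw [sortedEigs, dif_pos hM.isHermitian]
  exact hM.eigenvalues_pos _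

theorem sortedEigs_le_sortedEigs_conjTranspose_mul_mul {M : Matrix (Fin n) (Fin n) ℝ}
    (hM : M.IsHermitian) {J : Matrix (Fin n) (Fin k) ℝ} (hJ : Jᴴ * J = 1) {i : Fin n} {j : Fin k}
    (hij : n + j ≤ k + i) : sortedEigs M i ≤ sortedEigs (Jᴴ * M * J) j := by
  let V : EuclideanSpace ℝ (Fin k) →ₗᵢ[ℝ] EuclideanSpace ℝ (Fin n) :=
    (toEuclideanLin J).isometryOfInner fun x y => by
      have := inner_toEuclideanLin_conjTranspose_mul_mul 1 J x y
      rw [Matrix.mul_one, hJ] at this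
      simpa using this.symm
  rw [sortedEigs_eq_eigenvalues hM,
    sortedEigs_eq_eigenvalues (isHermitian_conjTranspose_mul_mul J hM)]
  exact eigenvalues_le_eigenvalues_of_re_inner_le _ _ _ _ V
    (fun x => (inner_toEuclideanLin_conjTranspose_mul_mul M J x x).ge) hij

lemma sortedEigs_le_sortedEigs_submatrix {M : Matrix (Fin n) (Fin n) ℝ} (hM : M.IsHermitian)
    {e : Fin k → Fin n} (he : Function.Injective e) {i : Fin n} {j : Fin k}
    (hij : n + j ≤ k + i) : sortedEigs M i ≤ sortedEigs (M.submatrix e e) j := by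
  let J : Matrix (Fin n) (Fin k) ℝ := (1 : Matrix (Fin n) (Fin n) ℝ).submatrix id e
  have hsub (N : Matrix (Fin n) (Fin n) ℝ) : Jᴴ * N * J = N.submatrix e e := by
    ext a b
    simp [J, Matrix.mul_apply, Matrix.one_apply]
  have hJ : Jᴴ * J = 1 := by simpa [submatrix_one e he] using hsub 1
  exact hsub M ▸ sortedEigs_le_sortedEigs_conjTranspose_mul_mul hM hJ hij

end SortedEigs

section BlockDiagonal

lemma posDef_fromBlocks_zero {R m n : Type*} [Ring R] [PartialOrder R] [StarRing R]
    [IsOrderedAddMonoid R] [Finite m] [Finite n]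
    {A : Matrix m m R} {B : Matrix n n R} (hA : A.PosDef) (hB : B.PosDef) :
    (fromBlocks A 0 0 B).PosDef := by
  have := Fintype.ofFinite m
  have := Fintype.ofFinite n
  refine .of_dotProduct_mulVec_pos (hA.isHermitian.fromBlocks (by simp) hB.isHermitian)
    fun x hx => ?_
  obtain ⟨u, v, rfl⟩ : ∃ u v, x = Sum.elim u v := ⟨_, _, (Sum.elim_comp_inl_inr x).symm⟩
  have hform : star (Sum.elim u v) ⬝ᵥ fromBlocks A 0 0 B *ᵥ Sum.elim u v =
      star u ⬝ᵥ A *ᵥ u + star v ⬝ᵥ B *ᵥ v := by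
    simp [fromBlocks_mulVec, dotProduct]
  rw [hform]
  obtain rfl | hu := eq_or_ne u 0
  · have hv : v ≠ 0 := by rintro rfl; simp at hx
    simpa using hB.dotProduct_mulVec_pos hv
  · exact add_pos_of_pos_of_nonneg (hA.dotProduct_mulVec_pos hu)
      (hB.posSemidef.dotProduct_mulVec_nonneg v)

variable {k : ℕ}

/-- The block diagonal matrix `diag(Θ, μ I_d)`, which extends a `k × k` matrix `Θ` to size `k + d`.
For `μ` at least the largest eigenvalue of `Θ`, the `k` smallest eigenvalues are those of `Θ`. -/
def padScalar (d : ℕ) (Θ : Matrix (Fin k) (Fin k) ℝ) (μ : ℝ) :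
    Matrix (Fin (k + d)) (Fin (k + d)) ℝ :=
  reindex finSumFinEquiv finSumFinEquiv (fromBlocks Θ 0 0 (diagonal fun _ => μ))

lemma posDef_padScalar (d : ℕ) {Θ : Matrix (Fin k) (Fin k) ℝ} (hΘ : Θ.PosDef) {μ : ℝ}
    (hμ : 0 < μ) : (padScalar d Θ μ).PosDef :=
  (posDef_fromBlocks_zero hΘ (.diagonal fun _ => hμ)).submatrix (Equiv.injective _)

lemma submatrix_padScalar (d : ℕ) (Θ : Matrix (Fin k) (Fin k) ℝ) (μ : ℝ) :
    (padScalar d Θ μ).submatrix (Fin.castAdd d) (Fin.castAdd d) = Θ := by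
  ext i j
  simp [padScalar]

lemma roots_charpoly_padScalar (d : ℕ) (Θ : Matrix (Fin k) (Fin k) ℝ) (μ : ℝ) :
    (padScalar d Θ μ).charpoly.roots = Multiset.replicate d μ + Θ.charpoly.roots := by
  rw [padScalar, charpoly_reindex, charpoly_fromBlocks_zero₁₂,
    Polynomial.roots_mul ((charpoly_monic _).mul (charpoly_monic _)).ne_zero, add_comm]
  simp [charpoly_diagonal, Multiset.nsmul_singleton]

lemma ofFn_sortedEigs_padScalar (d : ℕ) {Θ : Matrix (Fin k) (Fin k) ℝ} (hΘ : Θ.IsHermitian)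
    {μ : ℝ} (hμ : ∀ i, sortedEigs Θ i ≤ μ) :
    List.ofFn (sortedEigs (padScalar d Θ μ)) =
      List.replicate d μ ++ List.ofFn (sortedEigs Θ) := by
  have hpad : (padScalar d Θ μ).IsHermitian :=
    (hΘ.fromBlocks (by simp) (isHermitian_diagonal _)).submatrix _
  refine ofFn_sortedEigs_eq_of_sortedGE hpad ?_ ?_
  · rw [List.sortedGE_iff_pairwise, List.pairwise_append]
    refine ⟨List.pairwise_replicate_of_refl, (antitone_sortedEigs Θ).sortedGE_ofFn.pairwise, ?_⟩
    simpa [List.mem_replicate] using fun _ => hμ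
  · rw [roots_charpoly_padScalar, ← map_sortedEigs hΘ, Fin.univ_val_map, ← Multiset.coe_replicate,
      Multiset.coe_add]

lemma sortedEigs_padScalar_of_eq_add (d : ℕ) {Θ : Matrix (Fin k) (Fin k) ℝ} (hΘ : Θ.IsHermitian)
    {μ : ℝ} (hμ : ∀ i, sortedEigs Θ i ≤ μ) {i : Fin (k + d)} {j : Fin k} (hij : (i : ℕ) = d + j) :
    sortedEigs (padScalar d Θ μ) i = sortedEigs Θ j := by
  have hget : (List.ofFn (sortedEigs (padScalar d Θ μ)))[(i : ℕ)]? =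
      (List.ofFn (sortedEigs Θ))[(j : ℕ)]? := by
    rw [ofFn_sortedEigs_padScalar d hΘ hμ, List.getElem?_append_right (by simp [hij])]
    simp [hij]
  simpa using hget

end BlockDiagonal

section DFact

variable {n m k s : ℕ}

lemma sum_ite_sub_le {α : Type*} [AddCommMonoid α] (hsk : s ≤ k) (f : Fin k → α) :
    (∑ i : Fin k, if k - s ≤ (i : ℕ) then f i else 0) =
      ∑ i : Fin s, f ⟨k - s + i, by omega⟩ := by
  obtain ⟨d, rfl⟩ := Nat.exists_eq_add_of_le' hsk
  have hlow (x : Fin d) : ¬ d ≤ (x : ℕ) := x.isLt.not_ge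
  simp [Fin.sum_univ_add, Fin.natAdd, hlow]

lemma padCols_mul {l : Type*} (hkn : k ≤ n) (F : Matrix (Fin n) (Fin k) ℝ)
    (M : Matrix (Fin n) l ℝ) : padCols F * M = F * M.submatrix (Fin.castLE hkn) id := by
  obtain ⟨d, rfl⟩ := Nat.exists_eq_add_of_le hkn
  ext i j
  simp [Matrix.mul_apply, Fin.sum_univ_add, padCols, Fin.castAdd]

lemma padCols_mul_mul_transpose (hkn : k ≤ n) (F : Matrix (Fin n) (Fin k) ℝ)
    (M : Matrix (Fin n) (Fin n) ℝ) :
    padCols F * M * (padCols F)ᵀ =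
      F * M.submatrix (Fin.castLE hkn) (Fin.castLE hkn) * Fᵀ := by
  have htranspose {l : Type} (N : Matrix l (Fin n) ℝ) :
      N * (padCols F)ᵀ = N.submatrix id (Fin.castLE hkn) * Fᵀ := by
    simpa using congrArg transpose (padCols_mul hkn F Nᵀ)
  rw [padCols_mul hkn, Matrix.mul_assoc, htranspose, ← Matrix.mul_assoc]
  rfl

variable {A : Matrix (Fin m) (Fin n) ℝ} {υ ν : Fin n → ℝ} {π : Fin m → ℝ} {τ : ℝ}

lemma DFactFeasible.submatrix (hkn : k ≤ n) {F : Matrix (Fin n) (Fin k) ℝ}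
    {M : Matrix (Fin n) (Fin n) ℝ} (h : DFactFeasible A (padCols F) M υ ν π τ) :
    DFactFeasible A F (M.submatrix (Fin.castLE hkn) (Fin.castLE hkn)) υ ν π τ := by
  obtain ⟨hM, hυ, hν, hπ, heq⟩ := h
  rw [padCols_mul_mul_transpose hkn] at heq
  exact ⟨hM.submatrix (Fin.castLE_injective hkn), hυ, hν, hπ, heq⟩

lemma DFactFeasible.padScalar {d : ℕ} {A : Matrix (Fin m) (Fin (k + d)) ℝ}
    {F : Matrix (Fin (k + d)) (Fin k) ℝ} {υ ν : Fin (k + d) → ℝ} {Θ : Matrix (Fin k) (Fin k) ℝ}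
    (h : DFactFeasible A F Θ υ ν π τ) {μ : ℝ} (hμ : 0 < μ) :
    DFactFeasible A (padCols F) (padScalar d Θ μ) υ ν π τ := by
  obtain ⟨hΘ, hυ, hν, hπ, heq⟩ := h
  refine ⟨posDef_padScalar d hΘ hμ, hυ, hν, hπ, ?_⟩
  rw [padCols_mul_mul_transpose (Nat.le_add_right k d)]
  exact (submatrix_padScalar d Θ μ).symm ▸ heq

lemma dFactObj_eq_sum_fin (hsk : s ≤ k) (b : Fin m → ℝ) (Θ : Matrix (Fin k) (Fin k) ℝ) :
    DFactObj s b Θ ν π τ = -(∑ i : Fin s, Real.log (sortedEigs Θ ⟨k - s + i, by omega⟩))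
      + (∑ j, ν j) + (∑ i, π i * b i) + τ * s - s := by
  rw [DFactObj, sum_ite_sub_le hsk]

lemma dFactObj_submatrix_le (hsk : s ≤ k) (hkn : k ≤ n) (b : Fin m → ℝ)
    {M : Matrix (Fin n) (Fin n) ℝ} (hM : M.PosDef) :
    DFactObj s b (M.submatrix (Fin.castLE hkn) (Fin.castLE hkn)) ν π τ ≤ DFactObj s b M ν π τ := by
  rw [dFactObj_eq_sum_fin hsk, dFactObj_eq_sum_fin (hsk.trans hkn)]
  gcongr with i
  · exact sortedEigs_pos hM _
  · refine sortedEigs_le_sortedEigs_submatrix hM.isHermitian (Fin.castLE_injective hkn) ?_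
    simp only
    omega

lemma dFactObj_padScalar (hsk : s ≤ k) (d : ℕ) (b : Fin m → ℝ) {Θ : Matrix (Fin k) (Fin k) ℝ}
    (hΘ : Θ.IsHermitian) {μ : ℝ} (hμ : ∀ i, sortedEigs Θ i ≤ μ) :
    DFactObj s b (padScalar d Θ μ) ν π τ = DFactObj s b Θ ν π τ := by
  rw [dFactObj_eq_sum_fin hsk, dFactObj_eq_sum_fin (Nat.le_add_right_of_le hsk)]
  congr! 6 with i
  refine congrArg Real.log (sortedEigs_padScalar_of_eq_add d hΘ hμ ?_)
  simp only
  omega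

lemma exists_dFactFeasible_padCols (hsk : s ≤ k) (hkn : k ≤ n) (b : Fin m → ℝ)
    {F : Matrix (Fin n) (Fin k) ℝ} {Θ : Matrix (Fin k) (Fin k) ℝ}
    (h : DFactFeasible A F Θ υ ν π τ) :
    ∃ Θbar : Matrix (Fin n) (Fin n) ℝ, DFactFeasible A (padCols F) Θbar υ ν π τ ∧
      DFactObj s b Θbar ν π τ = DFactObj s b Θ ν π τ := by
  obtain ⟨d, rfl⟩ := Nat.exists_eq_add_of_le hkn
  obtain ⟨μ, hμ⟩ := Finite.exists_le (sortedEigs Θ)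
  exact ⟨padScalar d Θ (max μ 1), h.padScalar (by positivity),
    dFactObj_padScalar hsk d b h.1.isHermitian fun i => (hμ i).trans (le_max_left μ 1)⟩

end DFact

theorem stmt_13 {n m s k : ℕ} (hn : 0 < n) (hm : 0 < m) (hs : 0 < s)
    (hsk : s ≤ k) (hkn : k ≤ n)
    (C : Matrix (Fin n) (Fin n) ℝ) (hC : C.PosSemidef)
    (F : Matrix (Fin n) (Fin k) ℝ) (hCF : C = F * Fᵀ)
    (A : Matrix (Fin m) (Fin n) ℝ) (b : Fin m → ℝ) :
    -- (i): padding a feasible solution, preserving the objective value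
    (∀ (Θ : Matrix (Fin k) (Fin k) ℝ) (υ ν : Fin n → ℝ) (π : Fin m → ℝ) (τ : ℝ),
        DFactFeasible A F Θ υ ν π τ →
          ∃ Θbar : Matrix (Fin n) (Fin n) ℝ,
            DFactFeasible A (padCols F) Θbar υ ν π τ ∧
            DFactObj s b Θbar ν π τ = DFactObj s b Θ ν π τ) ∧
    -- (ii): truncating a feasible solution, not increasing the objective value
    (∀ (Θbar : Matrix (Fin n) (Fin n) ℝ) (υ ν : Fin n → ℝ) (π : Fin m → ℝ) (τ : ℝ),
        DFactFeasible A (padCols F) Θbar υ ν π τ →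
          ∃ Θ : Matrix (Fin k) (Fin k) ℝ,
            DFactFeasible A F Θ υ ν π τ ∧
            DFactObj s b Θ ν π τ ≤ DFactObj s b Θbar ν π τ) ∧
    -- consequently, the factorization bounds for F̄ and F coincide
    sInf {z : ℝ | ∃ (Θbar : Matrix (Fin n) (Fin n) ℝ) (υ ν : Fin n → ℝ) (π : Fin m → ℝ) (τ : ℝ),
        DFactFeasible A (padCols F) Θbar υ ν π τ ∧ z = DFactObj s b Θbar ν π τ} =
      sInf {z : ℝ | ∃ (Θ : Matrix (Fin k) (Fin k) ℝ) (υ ν : Fin n → ℝ) (π : Fin m → ℝ) (τ : ℝ),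
        DFactFeasible A F Θ υ ν π τ ∧ z = DFactObj s b Θ ν π τ} := by
  have truncate {Θbar υ ν π τ} (h : DFactFeasible A (padCols F) Θbar υ ν π τ) :
      ∃ Θ, DFactFeasible A F Θ υ ν π τ ∧ DFactObj s b Θ ν π τ ≤ DFactObj s b Θbar ν π τ :=
    ⟨_, h.submatrix hkn, dFactObj_submatrix_le hsk hkn b h.1⟩
  refine ⟨fun _ _ _ _ _ => exists_dFactFeasible_padCols hsk hkn b, fun _ _ _ _ _ => truncate,
    csInf_eq_csInf_of_forall_exists_le ?_ ?_⟩
  · rintro _ ⟨Θbar, υ, ν, π, τ, h, rfl⟩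
    obtain ⟨Θ, hΘ, hle⟩ := truncate h
    exact ⟨_, ⟨Θ, υ, ν, π, τ, hΘ, rfl⟩, hle⟩
  · rintro _ ⟨Θ, υ, ν, π, τ, h, rfl⟩
    obtain ⟨Θbar, hΘbar, heq⟩ := exists_dFactFeasible_padCols hsk hkn b h
    exact ⟨_, ⟨Θbar, υ, ν, π, τ, hΘbar, rfl⟩, heq.le⟩
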